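/- Let 0 < α < 1 and 0 < β < 1, let n be a natural number, and let M be the 2×2 real matrix [[c₁(n), 1], [1, c₄(n)]], where c₁(n) = −Γ(α+1)Γ(−β)/(Γ(α−n)Γ(n−β+1)) and c₄(n) = β·Γ(1−α)Γ(β)/(α·Γ(n−α+1)Γ(β−n)). Then for every vector v = (v₀, v₁) ∈ ℝ², M·v = (c₁(n)·v₀ + v₁) • (1, c₄(n)); in particular the range of M is spanned by the vector (1, c₄(n)). (This is the eigenvector-direction computation of Corollary 4.4: in the spectral representation, the eigenvector of A₀ at λₙ points in the direction (1, c₄(n)).) -/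

import Mathlib

/-!
The content is the identity `c₁ * c₄ = 1`: it makes the second row of `M` equal to `c₄` times the
first, so `M` has rank one and its image is the line through `(1, c₄)`. By Euler's reflection
formula, `Γ(x - n) Γ(n - x + 1) = (-1)ⁿ Γ(x) Γ(1 - x)`. Applied to `α` and to `β`, this removes
`n` from the denominator of `c₁ * c₄`, since the two signs cancel; what is left is `1` by
`Γ(α + 1) = α Γ(α)` and `Γ(1 - β) = -β Γ(-β)`.
-/

theorem gamma_sub_nat_mul_gamma (x : ℝ) (n : ℕ) :
    Real.Gamma (x - n) * Real.Gamma (n - x + 1) =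
      (-1) ^ n * (Real.Gamma x * Real.Gamma (1 - x)) := by
  have h : (n : ℝ) - x + 1 = 1 - (x - n) := by ring
  rw [h, Real.Gamma_mul_Gamma_one_sub, Real.Gamma_mul_Gamma_one_sub]
  have h2 : Real.pi * (x - n) = Real.pi * x - n * Real.pi := by ring
  rw [h2, Real.sin_sub_nat_mul_pi]
  rcases neg_one_pow_eq_or ℝ n with h | h <;> simp [h, div_neg]

theorem c₁_mul_c₄ (α β : ℝ) (hα0 : 0 < α) (hα1 : α < 1)
    (hβ0 : 0 < β) (hβ1 : β < 1) (n : ℕ) :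
    (-Real.Gamma (α + 1) * Real.Gamma (-β) /
        (Real.Gamma (α - n) * Real.Gamma (n - β + 1))) *
      (β * Real.Gamma (1 - α) * Real.Gamma β /
        (α * Real.Gamma (n - α + 1) * Real.Gamma (β - n))) = 1 := by
  have hα := gamma_sub_nat_mul_gamma α n
  have hβ := gamma_sub_nat_mul_gamma β n
  have h1 : Real.Gamma (α + 1) = α * Real.Gamma α := Real.Gamma_add_one hα0.ne'
  have h2 : Real.Gamma (1 - β) = -β * Real.Gamma (-β) := by
    rw [← Real.Gamma_add_one (neg_ne_zero.mpr hβ0.ne')]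
    congr 1
    ring
  have p1 : Real.Gamma α ≠ 0 := (Real.Gamma_pos_of_pos hα0).ne'
  have p2 : Real.Gamma (1 - α) ≠ 0 := (Real.Gamma_pos_of_pos (by linarith)).ne'
  have p3 : Real.Gamma β ≠ 0 := (Real.Gamma_pos_of_pos hβ0).ne'
  have p4 : Real.Gamma (1 - β) ≠ 0 := (Real.Gamma_pos_of_pos (by linarith)).ne'
  have hs : ((-1 : ℝ) ^ n) * (-1) ^ n = 1 := by rw [← mul_pow]; simp
  have hden : Real.Gamma (α - n) * Real.Gamma (n - β + 1) *
      (α * Real.Gamma (n - α + 1) * Real.Gamma (β - n)) =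
      α * (Real.Gamma α * Real.Gamma (1 - α)) * (Real.Gamma β * Real.Gamma (1 - β)) := by
    calc _ = α * (Real.Gamma (α - n) * Real.Gamma (n - α + 1)) *
          (Real.Gamma (β - n) * Real.Gamma (n - β + 1)) := by ring
      _ = ((-1 : ℝ) ^ n * (-1) ^ n) * (α * (Real.Gamma α * Real.Gamma (1 - α)) *
          (Real.Gamma β * Real.Gamma (1 - β))) := by rw [hα, hβ]; ring
      _ = _ := by rw [hs, one_mul]
  rw [div_mul_div_comm, hden, div_eq_one_iff_eq (by positivity), h1, h2]
  ring

theorem eigenvector_direction (α β : ℝ) (hα0 : 0 < α) (hα1 : α < 1)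
    (hβ0 : 0 < β) (hβ1 : β < 1) (n : ℕ)
    (c₁ c₄ : ℝ)
    (hc₁ : c₁ = -Real.Gamma (α + 1) * Real.Gamma (-β) /
        (Real.Gamma (α - n) * Real.Gamma (n - β + 1)))
    (hc₄ : c₄ = β * Real.Gamma (1 - α) * Real.Gamma β /
        (α * Real.Gamma (n - α + 1) * Real.Gamma (β - n)))
    (M : Matrix (Fin 2) (Fin 2) ℝ) (hM : M = !![c₁, 1; 1, c₄]) :
    (∀ v : Fin 2 → ℝ, M.mulVec v = (c₁ * v 0 + v 1) • ![1, c₄]) ∧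
      LinearMap.range M.mulVecLin = Submodule.span ℝ {![1, c₄]} := by
  have h : c₁ * c₄ = 1 := by
    rw [hc₁, hc₄]
    exact c₁_mul_c₄ α β hα0 hα1 hβ0 hβ1 n
  have key : ∀ v : Fin 2 → ℝ, M.mulVec v = (c₁ * v 0 + v 1) • ![1, c₄] := by
    intro v
    subst hM
    ext i
    fin_cases i
    · simp [Matrix.mulVec, dotProduct, Fin.sum_univ_two]
    · simp [Matrix.mulVec, dotProduct, Fin.sum_univ_two]
      linear_combination (-v 0) * h
  refine ⟨key, le_antisymm ?_ ?_⟩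
  · rintro _ ⟨v, rfl⟩
    rw [Matrix.mulVecLin_apply, key]
    exact Submodule.smul_mem _ _ (Submodule.mem_span_singleton_self _)
  · rw [Submodule.span_singleton_le_iff_mem]
    -- the second column of `M` is `(1, c₄)`
    exact ⟨![0, 1], by rw [Matrix.mulVecLin_apply, key]; simp⟩
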